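/- Let φ : ℝⁿ⁺¹ → ℝ be a C² solution of □φ = 0 (with □ = -∂ₜ² + Δ). Suppose φ and ∂ₜφ vanish on the ball B₀(R) = {(0,x) : |x| < R} in the hyperplane {t = 0}. Then φ vanishes on the solid double cone {(t,x) : |x| + |t| < R}. -/

import Mathlib

/-!
The proof is the energy method, with the sharp truncation to a light cone replaced by a smooth weight
so that no boundary integrals appear. Put `a = ∂ₜφ` and `bᵢ = ∂ᵢφ`; the wave equation and the symmetry
of second derivatives give the first-order system `∂ₜa = ∑ ∂ᵢbᵢ`, `∂ₜbᵢ = ∂ᵢa`. For a weight `w ≥ 0`,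

  `∂ₜ(w (a² + |b|²)) - 2 ∑ ∂ᵢ(w a bᵢ) = w_t (a² + |b|²) - 2 a (∇w · b)`,

which is nonpositive as soon as `|∇w| ≤ -w_t`. Integrating over a time slice removes the divergence
(`integral_fderiv_slice_eq_zero`), so the weighted energy decreases in time (`energy_vanishes`).

The weight is `w(t, x) = g(R - t - √(ε² + |x|²))` with `g` smooth, nondecreasing, and positive exactly
on `(0, ∞)` (`exists_causal_weight`). For `t ≥ 0` it is supported where `|x| + t ≤ R`, and at `t = 0`
the data kill the energy on its support. Letting `ε` be small enough for a given point of the open cone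
shows `∂ₜφ = 0` there, and integrating along the vertical segment from `t = 0` gives `φ = 0`. Negative
times follow by time reversal.
-/

open MeasureTheory Set

theorem fderiv_eq_zero_of_far {n : ℕ} {G : ℝ × EuclideanSpace ℝ (Fin n) → ℝ} {r : ℝ}
    (hsupp : ∀ t x, -1 < t → r ≤ ‖x‖ → G (t, x) = 0)
    {t : ℝ} (ht : -1 < t) {x : EuclideanSpace ℝ (Fin n)} (hx : r < ‖x‖) :
    fderiv ℝ G (t, x) = 0 := by
  have hopen : IsOpen {p : ℝ × EuclideanSpace ℝ (Fin n) | -1 < p.1 ∧ r < ‖p.2‖} :=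
    (isOpen_lt continuous_const continuous_fst).inter
      (isOpen_lt continuous_const continuous_snd.norm)
  have h : G =ᶠ[nhds (t, x)] fun _ => 0 := by
    filter_upwards [hopen.mem_nhds (show (t, x) ∈ _ from ⟨ht, hx⟩)] with p hp
    exact hsupp p.1 p.2 hp.1 hp.2.le
  rw [h.fderiv_eq]; simp

theorem hasCompactSupport_of_far {n : ℕ} {f : EuclideanSpace ℝ (Fin n) → ℝ} {r : ℝ}
    (h : ∀ x, r < ‖x‖ → f x = 0) : HasCompactSupport f := by
  refine HasCompactSupport.intro (isCompact_closedBall 0 r) fun x hx => h x ?_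
  simpa using hx

/-- Differentiation under the integral sign for a `C¹` function whose time slices are supported in a
fixed ball for times `t > -1`; the margin below `0` makes `t = 0` an interior time. -/
theorem hasDerivAt_integral_slice {n : ℕ} {G : ℝ × EuclideanSpace ℝ (Fin n) → ℝ}
    (hG : ContDiff ℝ 1 G) {r : ℝ} (hsupp : ∀ t x, -1 < t → r ≤ ‖x‖ → G (t, x) = 0)
    {t : ℝ} (ht : -1 < t) :
    HasDerivAt (fun s => ∫ x, G (s, x)) (∫ x, fderiv ℝ G (t, x) (1, 0)) t := by
  have hc : Continuous fun p => fderiv ℝ G p (1, 0) :=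
    (hG.continuous_fderiv one_ne_zero).clm_apply continuous_const
  have hslice : ∀ s, Continuous fun x : EuclideanSpace ℝ (Fin n) => G (s, x) := fun s =>
    hG.continuous.comp (by fun_prop)
  have hslice' : ∀ s, Continuous fun x : EuclideanSpace ℝ (Fin n) => fderiv ℝ G (s, x) (1, 0) :=
    fun s => hc.comp (by fun_prop : Continuous fun x : EuclideanSpace ℝ (Fin n) => (s, x))
  obtain ⟨a, ha1, hat⟩ := exists_between ht
  obtain ⟨C, hC⟩ := ((isCompact_Icc (a := a) (b := t + 1)).prod
    (isCompact_closedBall (0 : EuclideanSpace ℝ (Fin n)) r)).exists_bound_of_continuousOn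
    hc.continuousOn
  refine (hasDerivAt_integral_of_dominated_loc_of_deriv_le (s := Icc a (t + 1))
    (bound := (Metric.closedBall (0 : EuclideanSpace ℝ (Fin n)) r).indicator fun _ => C)
    (F' := fun s x => fderiv ℝ G (s, x) (1, 0)) (Icc_mem_nhds hat (by linarith))
    (.of_forall fun s => (hslice s).aestronglyMeasurable)
    ((hslice t).integrable_of_hasCompactSupport
      (hasCompactSupport_of_far fun x hx => hsupp t x ht hx.le))
    (hslice' t).aestronglyMeasurable (.of_forall fun x s hs => ?_) ?_
    (.of_forall fun x s _ => ?_)).2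
  · by_cases hx : x ∈ Metric.closedBall (0 : EuclideanSpace ℝ (Fin n)) r
    · rw [indicator_of_mem hx]; exact hC (s, x) ⟨hs, hx⟩
    · rw [indicator_of_notMem hx, fderiv_eq_zero_of_far hsupp (ha1.trans_le hs.1) (by simpa using hx)]
      simp
  · exact (integrable_indicator_iff measurableSet_closedBall).2
      (integrableOn_const (isCompact_closedBall _ _).measure_lt_top.ne)
  · exact ((hG.differentiable one_ne_zero (s, x)).hasFDerivAt.comp_hasDerivAt s
      ((hasDerivAt_id s).prodMk (hasDerivAt_const s x)))

theorem hasFDerivAt_slice {n : ℕ} {G : ℝ × EuclideanSpace ℝ (Fin n) → ℝ}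
    (hG : ContDiff ℝ 1 G) (t : ℝ) (x : EuclideanSpace ℝ (Fin n)) :
    HasFDerivAt (fun y => G (t, y))
      ((fderiv ℝ G (t, x)).comp (ContinuousLinearMap.inr ℝ ℝ (EuclideanSpace ℝ (Fin n)))) x :=
  (hG.differentiable one_ne_zero (t, x)).hasFDerivAt.comp x (hasFDerivAt_prodMk_right t x)

/-- The divergence theorem in the form needed here: a spatial derivative of a `C¹` function with
compactly supported time slices (for `t > -1`) integrates to zero over each slice. -/
theorem integral_fderiv_slice_eq_zero {n : ℕ} {G : ℝ × EuclideanSpace ℝ (Fin n) → ℝ}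
    (hG : ContDiff ℝ 1 G) {r : ℝ} (hsupp : ∀ t x, -1 < t → r ≤ ‖x‖ → G (t, x) = 0)
    {t : ℝ} (ht : -1 < t) (v : EuclideanSpace ℝ (Fin n)) :
    Integrable (fun x => fderiv ℝ G (t, x) (0, v)) ∧ ∫ x, fderiv ℝ G (t, x) (0, v) = 0 := by
  have hc : Continuous fun x : EuclideanSpace ℝ (Fin n) => fderiv ℝ G (t, x) (0, v) :=
    ((hG.continuous_fderiv one_ne_zero).clm_apply continuous_const).comp
      (by fun_prop : Continuous fun x : EuclideanSpace ℝ (Fin n) => (t, x))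
  have hi : Integrable fun x => fderiv ℝ G (t, x) (0, v) :=
    hc.integrable_of_hasCompactSupport (hasCompactSupport_of_far fun x hx => by
      rw [fderiv_eq_zero_of_far hsupp ht hx]; simp)
  have hi0 : Integrable fun x => G (t, x) :=
    (hG.continuous.comp (by fun_prop)).integrable_of_hasCompactSupport
      (hasCompactSupport_of_far fun x hx => hsupp t x ht hx.le)
  refine ⟨hi, ?_⟩
  have key := integral_mul_fderiv_eq_neg_fderiv_mul_of_integrable (μ := volume)
    (f := fun _ : EuclideanSpace ℝ (Fin n) => (1 : ℝ)) (g := fun x => G (t, x)) (v := v)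
    (by simp) (by simpa [(hasFDerivAt_slice hG t _).fderiv] using hi) (by simpa using hi0)
    (fun x _ => by fun_prop) (fun x _ => (hasFDerivAt_slice hG t x).differentiableAt)
  simpa [(hasFDerivAt_slice hG t _).fderiv] using key

/-- The weighted energy estimate for the first-order system `∂ₜa = ∑ ∂ᵢbᵢ`, `∂ₜbᵢ = ∂ᵢa`. The condition
`hcausal` on the weight `w` says that the quadratic form `w_t (α² + |β|²) - 2 α (∇w · β)` is nonpositive,
i.e. that `w` has a causal gradient and decreases in time. Then `∫ w (a² + |b|²)` is nonincreasing, so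
if the weighted energy density vanishes at time `0` it vanishes at all later times. -/
theorem energy_vanishes {n : ℕ} {w a : ℝ × EuclideanSpace ℝ (Fin n) → ℝ}
    {b : Fin n → ℝ × EuclideanSpace ℝ (Fin n) → ℝ}
    (hw : ContDiff ℝ 1 w) (ha : ContDiff ℝ 1 a) (hb : ∀ i, ContDiff ℝ 1 (b i))
    (hdiv : ∀ p, fderiv ℝ a p (1, 0) = ∑ i, fderiv ℝ (b i) p (0, EuclideanSpace.single i 1))
    (hcurl : ∀ p i, fderiv ℝ (b i) p (1, 0) = fderiv ℝ a p (0, EuclideanSpace.single i 1))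
    {r : ℝ} (hsupp : ∀ t x, -1 < t → r ≤ ‖x‖ → w (t, x) = 0) (hw0 : ∀ p, 0 ≤ w p)
    (hcausal : ∀ p (α : ℝ) (β : Fin n → ℝ), fderiv ℝ w p (1, 0) * (α ^ 2 + ∑ i, β i ^ 2) ≤
      2 * ∑ i, fderiv ℝ w p (0, EuclideanSpace.single i 1) * (α * β i))
    (hinit : ∀ x, w (0, x) * (a (0, x) ^ 2 + ∑ i, b i (0, x) ^ 2) = 0)
    {t : ℝ} (ht : 0 ≤ t) (x : EuclideanSpace ℝ (Fin n)) :
    w (t, x) * (a (t, x) ^ 2 + ∑ i, b i (t, x) ^ 2) = 0 := by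
  set e : ℝ × EuclideanSpace ℝ (Fin n) → ℝ := fun p => w p * (a p ^ 2 + ∑ i, b i p ^ 2) with he
  set J : Fin n → ℝ × EuclideanSpace ℝ (Fin n) → ℝ := fun i p => w p * (a p * b i p) with hJ
  have heC : ContDiff ℝ 1 e :=
    hw.mul ((ha.pow 2).add (ContDiff.sum fun i _ => (hb i).pow 2))
  have hJC : ∀ i, ContDiff ℝ 1 (J i) := fun i => hw.mul (ha.mul (hb i))
  have he_supp : ∀ t x, -1 < t → r ≤ ‖x‖ → e (t, x) = 0 := fun t x h1 h2 => by
    simp [he, hsupp t x h1 h2]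
  have hJ_supp : ∀ i t x, -1 < t → r ≤ ‖x‖ → J i (t, x) = 0 := fun i t x h1 h2 => by
    simp [hJ, hsupp t x h1 h2]
  have he0 : ∀ p, 0 ≤ e p := fun p =>
    mul_nonneg (hw0 p) (add_nonneg (sq_nonneg _) (Finset.sum_nonneg fun i _ => sq_nonneg _))
  -- `∂ₜe - 2 ∑ ∂ᵢJᵢ` contains only derivatives of `w`, because the field equations cancel the rest;
  -- what remains is nonpositive by `hcausal`.
  have hpt : ∀ p, fderiv ℝ e p (1, 0) ≤
      2 * ∑ i, fderiv ℝ (J i) p (0, EuclideanSpace.single i 1) := by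
    intro p
    have dw := (hw.differentiable one_ne_zero p).hasFDerivAt
    have da := (ha.differentiable one_ne_zero p).hasFDerivAt
    have db := fun i => ((hb i).differentiable one_ne_zero p).hasFDerivAt
    have de : fderiv ℝ e p (1, 0) = fderiv ℝ w p (1, 0) * (a p ^ 2 + ∑ i, b i p ^ 2) +
        2 * w p * ∑ i, (a p * fderiv ℝ (b i) p (0, EuclideanSpace.single i 1) +
          b i p * fderiv ℝ a p (0, EuclideanSpace.single i 1)) := by
      have h : HasFDerivAt e _ p :=
        dw.mul ((da.pow 2).add (HasFDerivAt.fun_sum fun i _ => (db i).pow 2))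
      rw [h.fderiv]
      simp [hdiv, hcurl, Finset.sum_add_distrib, Finset.mul_sum, mul_add]
      rw [← Finset.mul_sum _ _ (fderiv ℝ w p (1, 0))]
      simp only [mul_assoc, mul_left_comm (2 : ℝ)]
      ring
    have dJ : ∀ i, fderiv ℝ (J i) p (0, EuclideanSpace.single i 1) =
        fderiv ℝ w p (0, EuclideanSpace.single i 1) * (a p * b i p) +
        w p * (a p * fderiv ℝ (b i) p (0, EuclideanSpace.single i 1) +
          b i p * fderiv ℝ a p (0, EuclideanSpace.single i 1)) := by
      intro i
      have h : HasFDerivAt (J i) _ p := dw.mul (da.mul (db i))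
      rw [h.fderiv]
      simp
      ring
    have := hcausal p (a p) fun i => b i p
    simp only [de, dJ, Finset.sum_add_distrib, mul_add, ← Finset.mul_sum] at this ⊢
    linarith
  have hderiv : ∀ s, -1 < s → ∫ x, fderiv ℝ e (s, x) (1, 0) ≤ 0 := by
    intro s hs
    have hJi := fun i => integral_fderiv_slice_eq_zero (hJC i) (hJ_supp i) hs
      (EuclideanSpace.single i 1)
    have hc : Continuous fun x : EuclideanSpace ℝ (Fin n) => fderiv ℝ e (s, x) (1, 0) :=
      ((heC.continuous_fderiv one_ne_zero).clm_apply continuous_const).comp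
        (by fun_prop : Continuous fun x : EuclideanSpace ℝ (Fin n) => (s, x))
    calc ∫ x, fderiv ℝ e (s, x) (1, 0)
        ≤ ∫ x, 2 * ∑ i, fderiv ℝ (J i) (s, x) (0, EuclideanSpace.single i 1) := by
          refine integral_mono ?_ ((integrable_finsetSum _ fun i _ => (hJi i).1).const_mul 2)
            fun x => hpt (s, x)
          exact hc.integrable_of_hasCompactSupport (hasCompactSupport_of_far fun x hx => by
            rw [fderiv_eq_zero_of_far he_supp hs hx]; simp)
      _ = 0 := by
          rw [integral_const_mul, integral_finsetSum _ fun i _ => (hJi i).1]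
          simp [(hJi _).2]
  have hD := fun s (hs : -1 < s) => hasDerivAt_integral_slice heC he_supp hs
  have hanti : AntitoneOn (fun s => ∫ x, e (s, x)) (Ioi (-1)) :=
    antitoneOn_of_deriv_nonpos (convex_Ioi _)
      (fun s hs => (hD s hs).continuousAt.continuousWithinAt)
      (fun s hs => (hD s (interior_subset hs)).differentiableAt.differentiableWithinAt)
      fun s hs => by
        rw [(hD s (interior_subset hs)).deriv]; exact hderiv s (interior_subset hs)
  have hle : ∫ x, e (t, x) ≤ 0 := by
    refine (hanti (by simp) (show (-1 : ℝ) < t by linarith) ht).trans_eq ?_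
    simp [he, hinit]
  by_contra hne
  exact hle.not_gt ((heC.continuous.comp (by fun_prop :
    Continuous fun x : EuclideanSpace ℝ (Fin n) => (t, x))
    ).integral_pos_of_hasCompactSupport_nonneg_nonzero
    (hasCompactSupport_of_far fun x hx => he_supp t x (by linarith) hx.le)
    (fun x => he0 (t, x)) hne)

/-- A `C¹` weight with causal gradient, positive at a given point with `‖x‖ + t < R` and
vanishing outside `‖y‖ + s < R`. The radius is regularised to `√(ε² + ‖y‖²)`, which is smooth at the
origin, dominates `‖y‖`, and has gradient of norm at most `1`. -/
theorem exists_causal_weight {n : ℕ} {R t : ℝ} {x : EuclideanSpace ℝ (Fin n)}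
    (h : ‖x‖ + t < R) :
    ∃ w : ℝ × EuclideanSpace ℝ (Fin n) → ℝ, ContDiff ℝ 1 w ∧ (∀ p, 0 ≤ w p) ∧ 0 < w (t, x) ∧
      (∀ s y, R ≤ ‖y‖ + s → w (s, y) = 0) ∧
      ∀ p (α : ℝ) (β : Fin n → ℝ), fderiv ℝ w p (1, 0) * (α ^ 2 + ∑ i, β i ^ 2) ≤
        2 * ∑ i, fderiv ℝ w p (0, EuclideanSpace.single i 1) * (α * β i) := by
  -- `ε` must leave room for the regularised radius at `x`, which is at most `‖x‖ + ε`.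
  obtain ⟨ε, hε, hεR⟩ : ∃ ε > 0, ‖x‖ + ε + t < R :=
    ⟨(R - (‖x‖ + t)) / 2, by linarith, by linarith⟩
  set H : EuclideanSpace ℝ (Fin n) → ℝ := fun y => √(ε ^ 2 + ‖y‖ ^ 2) with hH
  have hpos : ∀ y : EuclideanSpace ℝ (Fin n), 0 < ε ^ 2 + ‖y‖ ^ 2 := fun y => by positivity
  have hHpos : ∀ y, 0 < H y := fun y => Real.sqrt_pos.2 (hpos y)
  have hHC : ContDiff ℝ 1 H := ContDiff.sqrt (contDiff_const.add (contDiff_norm_sq ℝ)) fun y => (hpos y).ne'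
  have hg : ContDiff ℝ 1 expNegInvGlue := expNegInvGlue.contDiff
  refine ⟨fun p => expNegInvGlue (R - p.1 - H p.2), hg.comp (by fun_prop),
    fun p => expNegInvGlue.nonneg _, expNegInvGlue.pos_of_pos ?_, fun s y hy =>
      expNegInvGlue.zero_of_nonpos ?_, fun p α β => ?_⟩
  · have : H x ≤ ‖x‖ + ε := Real.sqrt_le_iff.2 ⟨by positivity, by nlinarith [norm_nonneg x]⟩
    simp only
    linarith
  · have : ‖y‖ ≤ H y := Real.le_sqrt_of_sq_le (by nlinarith)
    simp only
    linarith
  · have dH : HasFDerivAt H ((1 / (2 * H p.2)) • ((2 : ℕ) • innerSL ℝ p.2)) p.2 :=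
      (((hasStrictFDerivAt_norm_sq p.2).hasFDerivAt).const_add (ε ^ 2)).sqrt (hpos _).ne'
    have dg := (hg.differentiable one_ne_zero (R - p.1 - H p.2)).hasDerivAt
    have dw := dg.comp_hasFDerivAt p
      ((hasFDerivAt_fst (𝕜 := ℝ) (p := p)).const_sub R |>.sub (dH.comp p hasFDerivAt_snd))
    have hg' : 0 ≤ deriv expNegInvGlue (R - p.1 - H p.2) := expNegInvGlue.monotone.deriv_nonneg
    have e0 : fderiv ℝ (fun p : ℝ × EuclideanSpace ℝ (Fin n) =>
        expNegInvGlue (R - p.1 - H p.2)) p (1, 0) = -deriv expNegInvGlue (R - p.1 - H p.2) := by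
      erw [dw.fderiv]; simp
    have ei : ∀ i, fderiv ℝ (fun p : ℝ × EuclideanSpace ℝ (Fin n) =>
        expNegInvGlue (R - p.1 - H p.2)) p (0, EuclideanSpace.single i 1) =
        -deriv expNegInvGlue (R - p.1 - H p.2) * (p.2 i / H p.2) := by
      intro i
      erw [dw.fderiv]; simp [EuclideanSpace.inner_single_right]
      left
      field_simp
    simp only [e0, ei]
    -- `c = ∇H · β` satisfies `c² ≤ |β|²` by Cauchy–Schwarz, whence `2αc ≤ α² + |β|²`.
    set c := ∑ i, p.2 i / H p.2 * β i with hc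
    have hc2 : c ^ 2 ≤ ∑ i, β i ^ 2 := by
      have h1 := Finset.sum_mul_sq_le_sq_mul_sq Finset.univ (fun i => p.2 i / H p.2) β
      have h2 : ∑ i, (p.2 i / H p.2) ^ 2 ≤ 1 := by
        simp only [div_pow, ← Finset.sum_div]
        rw [div_le_one (by have := hHpos p.2; positivity), Real.sq_sqrt (hpos _).le,
          ← EuclideanSpace.real_norm_sq_eq]
        nlinarith
      exact h1.trans (mul_le_of_le_one_left (Finset.sum_nonneg fun i _ => sq_nonneg _) h2)
    have hs : ∑ i, -deriv expNegInvGlue (R - p.1 - H p.2) * (p.2 i / H p.2) * (α * β i) =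
        -deriv expNegInvGlue (R - p.1 - H p.2) * (α * c) := by
      rw [hc, Finset.mul_sum, Finset.mul_sum]
      exact Finset.sum_congr rfl fun i _ => by ring
    rw [hs]
    nlinarith [mul_nonneg hg' (show 0 ≤ α ^ 2 + ∑ i, β i ^ 2 - 2 * (α * c) by
      nlinarith [sq_nonneg (α - c)])]

/-- Domain of dependence for the first-order system, in the forward time direction; only the
vanishing of the component `a = ∂ₜφ` is recorded. -/
theorem first_order_vanishes {n : ℕ} {R : ℝ} {a : ℝ × EuclideanSpace ℝ (Fin n) → ℝ}
    {b : Fin n → ℝ × EuclideanSpace ℝ (Fin n) → ℝ}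
    (ha : ContDiff ℝ 1 a) (hb : ∀ i, ContDiff ℝ 1 (b i))
    (hdiv : ∀ p, fderiv ℝ a p (1, 0) = ∑ i, fderiv ℝ (b i) p (0, EuclideanSpace.single i 1))
    (hcurl : ∀ p i, fderiv ℝ (b i) p (1, 0) = fderiv ℝ a p (0, EuclideanSpace.single i 1))
    (ha0 : ∀ x, ‖x‖ < R → a (0, x) = 0) (hb0 : ∀ i x, ‖x‖ < R → b i (0, x) = 0)
    {t : ℝ} (ht : 0 ≤ t) {x : EuclideanSpace ℝ (Fin n)} (h : ‖x‖ + t < R) : a (t, x) = 0 := by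
  obtain ⟨w, hw, hw0, hwpos, hwsupp, hcausal⟩ := exists_causal_weight h
  have key := energy_vanishes hw ha hb hdiv hcurl (r := R + 1)
    (fun s y hs hy => hwsupp s y (by linarith)) hw0 hcausal (fun y => by
      by_cases hy : ‖y‖ < R
      · simp [ha0 y hy, hb0 _ y hy]
      · rw [hwsupp 0 y (by linarith [not_lt.1 hy]), zero_mul]) ht x
  have h1 := (mul_eq_zero.1 key).resolve_left hwpos.ne'
  have h2 : 0 ≤ ∑ i, b i (t, x) ^ 2 := Finset.sum_nonneg fun i _ => sq_nonneg _
  exact pow_eq_zero_iff two_ne_zero |>.1 (le_antisymm (by linarith) (sq_nonneg _))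

/-- The forward half `t ≥ 0` of the domain of dependence. -/
theorem vanishes_future {n : ℕ} {R : ℝ}
    {φ : ℝ × EuclideanSpace ℝ (Fin n) → ℝ} (hφ : ContDiff ℝ 2 φ)
    (hwave : ∀ p : ℝ × EuclideanSpace ℝ (Fin n),
      fderiv ℝ (fun q => fderiv ℝ φ q (1, 0)) p (1, 0) =
      ∑ i : Fin n,
        fderiv ℝ (fun q => fderiv ℝ φ q (0, EuclideanSpace.single i 1)) p
          (0, EuclideanSpace.single i 1))
    (hdata : ∀ x : EuclideanSpace ℝ (Fin n), ‖x‖ < R →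
      φ (0, x) = 0 ∧ fderiv ℝ φ (0, x) (1, 0) = 0)
    {t : ℝ} (ht : 0 ≤ t) {x : EuclideanSpace ℝ (Fin n)} (h : ‖x‖ + t < R) : φ (t, x) = 0 := by
  have hF : ContDiff ℝ 1 (fderiv ℝ φ) := hφ.fderiv_right (by norm_num)
  have hFv : ∀ v, ContDiff ℝ 1 fun q => fderiv ℝ φ q v := fun v => hF.clm_apply contDiff_const
  have hFF : ∀ p u v, fderiv ℝ (fun q => fderiv ℝ φ q v) p u = fderiv ℝ (fderiv ℝ φ) p u v := by
    intro p u v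
    rw [fderiv_clm_apply (hF.differentiable one_ne_zero p) (by fun_prop)]
    simp
  have hsymm : ∀ p, IsSymmSndFDerivAt ℝ φ p := fun p =>
    hφ.contDiffAt.isSymmSndFDerivAt (by simp)
  have hdφ : ∀ s y, ‖y‖ + s < R → 0 ≤ s → fderiv ℝ φ (s, y) (1, 0) = 0 := fun s y hy hs =>
    first_order_vanishes (hFv (1, 0)) (fun i => hFv (0, EuclideanSpace.single i 1)) hwave
      (fun p i => by rw [hFF, hFF]; exact hsymm p _ _) (fun y hy => (hdata y hy).2)
      -- `φ` vanishes on an open subset of `{t = 0}`, so its spatial derivatives vanish there.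
      (fun i y hy => by
        have hz : (fun z => φ (0, z)) =ᶠ[nhds y] fun _ => 0 := by
          filter_upwards [(isOpen_lt continuous_norm continuous_const).mem_nhds hy] with z hz
          exact (hdata z hz).1
        have hd := (hφ.differentiable two_ne_zero (0, y)).hasFDerivAt.comp y
          (hasFDerivAt_prodMk_right (0 : ℝ) y)
        have := hd.fderiv.symm.trans (hz.fderiv_eq.trans (fderiv_const_apply (0 : ℝ)))
        simpa using DFunLike.congr_fun this (EuclideanSpace.single i 1)) hs hy
  have hdt : ∀ s, HasDerivAt (fun s => φ (s, x)) (fderiv ℝ φ (s, x) (1, 0)) s := fun s =>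
    (hφ.differentiable two_ne_zero (s, x)).hasFDerivAt.comp_hasDerivAt s
      ((hasDerivAt_id s).prodMk (hasDerivAt_const s x))
  have hconst := constant_of_has_deriv_right_zero (f := fun s => φ (s, x)) (a := 0) (b := t)
    (fun s _ => (hdt s).continuousAt.continuousWithinAt)
    (fun s hs => by
      rw [← hdφ s x (by linarith [hs.2]) hs.1]; exact (hdt s).hasDerivWithinAt) t ⟨ht, le_rfl⟩
  exact hconst.trans (hdata x (by linarith)).1

theorem fderiv_comp_timeReversal {n : ℕ} {G : ℝ × EuclideanSpace ℝ (Fin n) → ℝ}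
    (hG : Differentiable ℝ G) (p v : ℝ × EuclideanSpace ℝ (Fin n)) :
    fderiv ℝ (fun q => G (-q.1, q.2)) p v = fderiv ℝ G (-p.1, p.2) (-v.1, v.2) := by
  have h := (hG (-p.1, p.2)).hasFDerivAt.comp p
    ((hasFDerivAt_fst (𝕜 := ℝ) (p := p)).neg.prodMk hasFDerivAt_snd)
  erw [h.fderiv]; simp

theorem domain_of_dependence (n : ℕ) (R : ℝ)
    (φ : ℝ × EuclideanSpace ℝ (Fin n) → ℝ) (hφ : ContDiff ℝ 2 φ)
    (hwave : ∀ p : ℝ × EuclideanSpace ℝ (Fin n),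
      fderiv ℝ (fun q => fderiv ℝ φ q (1, 0)) p (1, 0) =
      ∑ i : Fin n,
        fderiv ℝ (fun q => fderiv ℝ φ q (0, EuclideanSpace.single i 1)) p
          (0, EuclideanSpace.single i 1))
    (hdata : ∀ x : EuclideanSpace ℝ (Fin n), ‖x‖ < R →
      φ (0, x) = 0 ∧ fderiv ℝ φ (0, x) (1, 0) = 0) :
    ∀ p : ℝ × EuclideanSpace ℝ (Fin n), ‖p.2‖ + |p.1| < R → φ p = 0 := by
  rintro ⟨t, x⟩ h
  rcases le_total 0 t with ht | ht
  · exact vanishes_future hφ hwave hdata ht (by simpa [abs_of_nonneg ht] using h)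
  have hφ1 := hφ.differentiable two_ne_zero
  have hF : ContDiff ℝ 1 (fderiv ℝ φ) := hφ.fderiv_right (by norm_num)
  have hFv : ∀ v, Differentiable ℝ fun q => fderiv ℝ φ q v := fun v =>
    (hF.clm_apply contDiff_const).differentiable one_ne_zero
  have hneg : ∀ q : ℝ × EuclideanSpace ℝ (Fin n),
      fderiv ℝ φ q (-1, 0) = -fderiv ℝ φ q (1, 0) := fun q => by
    rw [← map_neg]; simp
  -- The past half follows by applying the forward half to the time reversal of `φ`.
  have key := vanishes_future (R := R) (φ := fun q => φ (-q.1, q.2)) (by fun_prop)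
    (fun p => by
      simp only [fderiv_comp_timeReversal hφ1, hneg, fderiv_fun_neg, neg_zero]
      have h1 := fderiv_comp_timeReversal (hFv (1, 0)) p (1, 0)
      have h2 := fun i => fderiv_comp_timeReversal (hFv (0, EuclideanSpace.single i 1)) p
        (0, EuclideanSpace.single i 1)
      simp only [neg_zero] at h2
      simp only [neg_apply, h1, h2]
      rw [← hwave, ← map_neg]
      simp)
    (fun y hy => by
      simpa [fderiv_comp_timeReversal hφ1, hneg] using hdata y hy)
    (t := -t) (x := x) (by linarith) (by simpa [abs_of_nonpos ht] using h)
  simpa using key
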